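/- arXiv:2201.03660 — 2 statements merged into one kernel-verified Lean document; each statement's English description precedes it below -/
import Mathlib

section
/- The ring of polynomials in three variables x, y, z over a field of characteristic zero that are invariant under the cyclic permutation x → y → z → x is generated as an algebra by the elementary symmetric polynomials e₁ = x + y + z, e₂ = xy + yz + zx, e₃ = xyz, together with the alternating polynomial δ = (x − y)(y − z)(z − x). -/
/-!
Write `σ` for the rotation and `τ` for the transposition `x ↔ y`. For a `σ`-invariant `p`, the
polynomial `τ p` is again `σ`-invariant because `σ τ = τ σ⁻¹`, so `p = (p + τ p) / 2 + (p - τ p) / 2`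
splits `p` into a part fixed by `σ` and `τ` and a part `a` with `σ a = a`, `τ a = -a`.

The first part is symmetric, as `σ` and `τ` generate the symmetric group, and the fundamental theorem
of symmetric polynomials puts it in the algebra generated by `e₁, e₂, e₃`
(`mem_adjoin_of_invariant`). The second part changes sign under each transposition, so it vanishes
when two variables are identified; hence it is divisible by each of the three differences of
variables, and by their product `δ` (`altPoly_dvd_of_alternating`). The quotient is symmetric.
-/

open MvPolynomial

/-- The first elementary symmetric polynomial `x + y + z`. -/
noncomputable def esym1 (k : Type*) [CommRing k] : MvPolynomial (Fin 3) k := X 0 + X 1 + X 2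

/-- The second elementary symmetric polynomial `xy + yz + zx`. -/
noncomputable def esym2 (k : Type*) [CommRing k] : MvPolynomial (Fin 3) k :=
  X 0 * X 1 + X 1 * X 2 + X 2 * X 0

/-- The third elementary symmetric polynomial `xyz`. -/
noncomputable def esym3 (k : Type*) [CommRing k] : MvPolynomial (Fin 3) k := X 0 * X 1 * X 2

/-- The alternating polynomial `δ = (x − y)(y − z)(z − x)`. -/
noncomputable def altPoly (k : Type*) [CommRing k] : MvPolynomial (Fin 3) k :=
  (X 0 - X 1) * (X 1 - X 2) * (X 2 - X 0)

/-- The map on variables that identifies `j` with `i`. -/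
def collapse (i j : Fin 3) (n : Fin 3) : Fin 3 := if n = j then i else n

/-- The factor theorem. It holds because identifying the variables `i` and `j` does not change a
polynomial modulo `X i - X j`. -/
lemma dvd_of_rename_collapse_eq_zero {k : Type*} [CommRing k] (i j : Fin 3)
    (p : MvPolynomial (Fin 3) k) (hp : rename (collapse i j) p = 0) :
    (X i - X j : MvPolynomial (Fin 3) k) ∣ p := by
  have key : ∀ q : MvPolynomial (Fin 3) k, (X i - X j) ∣ rename (collapse i j) q - q := by
    intro q
    induction q using MvPolynomial.induction_on with
    | C a => simp
    | add q r hq hr =>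
      rw [map_add, add_sub_add_comm]
      exact dvd_add hq hr
    | mul_X q n hq =>
      have hn : (X i - X j : MvPolynomial (Fin 3) k) ∣ X (collapse i j n) - X n := by
        unfold collapse
        split_ifs with h
        · rw [h]
        · simp
      rw [map_mul, rename_X]
      have e : rename (collapse i j) q * X (collapse i j n) - q * X n
          = (rename (collapse i j) q - q) * X (collapse i j n)
            + q * (X (collapse i j n) - X n) := by ring
      rw [e]
      exact dvd_add (hq.mul_right _) (hn.mul_left _)
  simpa [hp] using key p

lemma rename_collapse_eq_zero {k : Type*} [Field k] [CharZero k] (i j : Fin 3)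
    (p : MvPolynomial (Fin 3) k) (hp : rename (Equiv.swap i j) p = -p) :
    rename (collapse i j) p = 0 := by
  have hc : collapse i j ∘ Equiv.swap i j = collapse i j := by
    clear hp
    revert i j
    decide
  have h := congrArg (rename (collapse i j)) hp
  rw [rename_rename, hc, map_neg] at h
  exact self_eq_neg.mp h

lemma rename_rotate_altPoly (k : Type*) [CommRing k] :
    rename (finRotate 3) (altPoly k) = altPoly k := by
  have h0 : finRotate 3 0 = 1 := by decide
  have h1 : finRotate 3 1 = 2 := by decide
  have h2 : finRotate 3 2 = 0 := by decide
  simp only [altPoly, map_mul, map_sub, rename_X, h0, h1, h2]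
  ring

lemma rename_swap_altPoly (k : Type*) [CommRing k] :
    rename (Equiv.swap (0 : Fin 3) 1) (altPoly k) = -altPoly k := by
  have h0 : Equiv.swap (0 : Fin 3) 1 0 = 1 := by decide
  have h1 : Equiv.swap (0 : Fin 3) 1 1 = 0 := by decide
  have h2 : Equiv.swap (0 : Fin 3) 1 2 = 2 := by decide
  simp only [altPoly, map_mul, map_sub, rename_X, h0, h1, h2]
  ring

lemma altPoly_ne_zero (k : Type*) [Field k] : altPoly k ≠ 0 := by
  have h : ∀ i j : Fin 3, i ≠ j → (X i - X j : MvPolynomial (Fin 3) k) ≠ 0 :=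
    fun i j hij => sub_ne_zero.mpr fun e => hij (X_injective e)
  exact mul_ne_zero (mul_ne_zero (h _ _ (by decide)) (h _ _ (by decide))) (h _ _ (by decide))

lemma altPoly_dvd_of_alternating {k : Type*} [Field k] [CharZero k]
    (a : MvPolynomial (Fin 3) k) (hr : rename (finRotate 3) a = a)
    (hs : rename (Equiv.swap (0 : Fin 3) 1) a = -a) : altPoly k ∣ a := by
  -- The other two transpositions are conjugates of the first by the rotation.
  have conj : ∀ i j : Fin 3, rename (Equiv.swap i j) a = -a →
      rename (Equiv.swap (finRotate 3 i) (finRotate 3 j)) a = -a := by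
    intro i j h
    have e : (Equiv.swap (finRotate 3 i) (finRotate 3 j) : Fin 3 → Fin 3) ∘ finRotate 3
        = finRotate 3 ∘ Equiv.swap i j := by
      clear h
      revert i j
      decide
    conv_lhs => rw [← hr]
    rw [rename_rename, e, ← rename_rename, h, map_neg, hr]
  have hs12 : rename (Equiv.swap (1 : Fin 3) 2) a = -a := conj 0 1 hs
  have hs20 : rename (Equiv.swap (2 : Fin 3) 0) a = -a := conj 1 2 hs12
  have ne : ∀ i j : Fin 3, i ≠ j → (X i - X j : MvPolynomial (Fin 3) k) ≠ 0 :=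
    fun i j hij => sub_ne_zero.mpr fun e => hij (X_injective e)
  obtain ⟨b, rfl⟩ := dvd_of_rename_collapse_eq_zero 0 1 a (rename_collapse_eq_zero 0 1 a hs)
  -- Identifying two variables kills the product but none of the factors already split off.
  have hb := rename_collapse_eq_zero 1 2 _ hs12
  rw [map_mul, map_sub, rename_X, rename_X] at hb
  obtain ⟨c, rfl⟩ := dvd_of_rename_collapse_eq_zero 1 2 b
    ((mul_eq_zero.mp hb).resolve_left (ne _ _ (by decide)))
  have hc := rename_collapse_eq_zero 2 0 _ hs20
  rw [map_mul, map_mul, map_sub, map_sub, rename_X, rename_X, rename_X] at hc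
  obtain ⟨d, rfl⟩ := dvd_of_rename_collapse_eq_zero 2 0 c
    ((mul_eq_zero.mp ((mul_eq_zero.mp hc).resolve_left
      (ne _ _ (by decide)))).resolve_left (ne _ _ (by decide)))
  exact ⟨d, by unfold altPoly; ring⟩

lemma esymm_one_eq (k : Type*) [CommRing k] : esymm (Fin 3) k 1 = esym1 k := by
  simp [esymm_one, esym1, Fin.sum_univ_three]

lemma esymm_two_eq (k : Type*) [CommRing k] : esymm (Fin 3) k 2 = esym2 k := by
  have h : Finset.powersetCard 2 (Finset.univ : Finset (Fin 3)) = {{0, 1}, {1, 2}, {2, 0}} := by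
    decide
  rw [esymm, h, Finset.sum_insert (by decide), Finset.sum_insert (by decide),
    Finset.sum_singleton, Finset.prod_pair (by decide), Finset.prod_pair (by decide),
    Finset.prod_pair (by decide), esym2]
  ring

lemma esymm_three_eq (k : Type*) [CommRing k] : esymm (Fin 3) k 3 = esym3 k := by
  have h : Finset.powersetCard 3 (Finset.univ : Finset (Fin 3)) = {Finset.univ} := by
    decide
  rw [esymm, h, Finset.sum_singleton, Fin.prod_univ_three, esym3]

/-- A polynomial fixed by the rotation and by one transposition is symmetric, hence a polynomial in
`e₁, e₂, e₃`. -/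
lemma mem_adjoin_of_invariant {k : Type*} [Field k] (p : MvPolynomial (Fin 3) k)
    (hr : rename (finRotate 3) p = p) (hs : rename (Equiv.swap (0 : Fin 3) 1) p = p) :
    p ∈ Algebra.adjoin k ({esym1 k, esym2 k, esym3 k, altPoly k} :
        Set (MvPolynomial (Fin 3) k)) := by
  have hmul : ∀ e f : Equiv.Perm (Fin 3), rename e p = p → rename f p = p →
      rename (e * f : Equiv.Perm (Fin 3)) p = p := by
    intro e f he hf
    rw [Equiv.Perm.coe_mul, ← rename_rename, hf, he]
  have hsymm : p ∈ symmetricSubalgebra (Fin 3) k := by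
    intro e
    have cases : ∀ e : Equiv.Perm (Fin 3), e = finRotate 3 ∨ e = finRotate 3 * finRotate 3 ∨
        e = finRotate 3 * (finRotate 3 * finRotate 3) ∨ e = Equiv.swap 0 1 ∨
        e = finRotate 3 * Equiv.swap 0 1 ∨ e = finRotate 3 * (finRotate 3 * Equiv.swap 0 1) := by
      decide
    rcases cases e with rfl | rfl | rfl | rfl | rfl | rfl
    · exact hr
    · exact hmul _ _ hr hr
    · exact hmul _ _ hr (hmul _ _ hr hr)
    · exact hs
    · exact hmul _ _ hr hs
    · exact hmul _ _ hr (hmul _ _ hr hs)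
  obtain ⟨q, hq⟩ := esymmAlgHom_fin_surjective k (le_refl 3) ⟨p, hsymm⟩
  have hq' : aeval (fun i : Fin 3 => esymm (Fin 3) k (i + 1)) q = p := by
    rw [← esymmAlgHom_apply, hq]
  rw [← hq']
  refine Algebra.adjoin_mono ?_ ((Algebra.adjoin_range_eq_range_aeval k
    fun i : Fin 3 => esymm (Fin 3) k (i + 1)).ge ⟨q, rfl⟩)
  rintro _ ⟨i, rfl⟩
  fin_cases i
  · exact Or.inl (esymm_one_eq k)
  · simp [esymm_two_eq]
  · simp [esymm_three_eq]

/-- Over a field of characteristic zero, a polynomial in three variables is invariant under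
the cyclic permutation `x → y → z → x` of the variables if and only if it lies in the
subalgebra generated by `e₁, e₂, e₃` and `δ = (x − y)(y − z)(z − x)`. -/
theorem cyclic_invariants_generated {k : Type*} [Field k] [CharZero k]
    (p : MvPolynomial (Fin 3) k) :
    rename (finRotate 3) p = p ↔
      p ∈ Algebra.adjoin k ({esym1 k, esym2 k, esym3 k, altPoly k} :
        Set (MvPolynomial (Fin 3) k)) := by
  have hr0 : finRotate 3 0 = 1 := by decide
  have hr1 : finRotate 3 1 = 2 := by decide
  have hr2 : finRotate 3 2 = 0 := by decide
  constructor
  · intro hp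
    have hp2 : rename (finRotate 3 ∘ finRotate 3) p = p := by
      rw [← rename_rename, hp, hp]
    set t := rename (Equiv.swap (0 : Fin 3) 1) p with ht
    have htr : rename (finRotate 3) t = t := by
      have e : (finRotate 3 : Fin 3 → Fin 3) ∘ Equiv.swap (0 : Fin 3) 1
          = Equiv.swap (0 : Fin 3) 1 ∘ (finRotate 3 ∘ finRotate 3) := by decide
      rw [ht, rename_rename, e, ← rename_rename, hp2]
    have hts : rename (Equiv.swap (0 : Fin 3) 1) t = p := by
      have e : (Equiv.swap (0 : Fin 3) 1 : Fin 3 → Fin 3) ∘ Equiv.swap (0 : Fin 3) 1 = id := by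
        decide
      rw [ht, rename_rename, e, rename_id_apply]
    have hsum := mem_adjoin_of_invariant (p + t) (by rw [map_add, hp, htr])
      (by rw [map_add, hts, ← ht, add_comm])
    obtain ⟨q, hq⟩ := altPoly_dvd_of_alternating (p - t) (by rw [map_sub, hp, htr])
      (by rw [map_sub, hts, ← ht, neg_sub])
    have hqr : rename (finRotate 3) q = q := by
      apply mul_left_cancel₀ (altPoly_ne_zero k)
      have h := congrArg (rename (finRotate 3)) hq
      rw [map_sub, hp, htr, map_mul, rename_rotate_altPoly, hq] at h
      exact h.symm
    have hqs : rename (Equiv.swap (0 : Fin 3) 1) q = q := by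
      apply mul_left_cancel₀ (altPoly_ne_zero k)
      have h := congrArg (rename (Equiv.swap (0 : Fin 3) 1)) hq
      rw [map_sub, hts, ← ht, map_mul, rename_swap_altPoly] at h
      linear_combination h + hq
    have hdiff := mul_mem (Algebra.subset_adjoin (R := k)
      (show altPoly k ∈ ({esym1 k, esym2 k, esym3 k, altPoly k} :
        Set (MvPolynomial (Fin 3) k)) by simp)) (mem_adjoin_of_invariant q hqr hqs)
    rw [← hq] at hdiff
    have hfin := Subalgebra.smul_mem _ (add_mem hsum hdiff) (2⁻¹ : k)
    have e : (2⁻¹ : k) • (p + t + (p - t)) = p := by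
      have e2 : p + t + (p - t) = (2 : k) • p := by rw [two_smul]; ring
      rw [e2, smul_smul, inv_mul_cancel₀ two_ne_zero, one_smul]
    rwa [e] at hfin
  · intro hp
    induction hp using Algebra.adjoin_induction with
    | mem x hx =>
      rcases hx with rfl | rfl | rfl | rfl
      · simp only [esym1, map_add, rename_X, hr0, hr1, hr2]
        ring
      · simp only [esym2, map_add, map_mul, rename_X, hr0, hr1, hr2]
        ring
      · simp only [esym3, map_mul, rename_X, hr0, hr1, hr2]
        ring
      · exact rename_rotate_altPoly k
    | algebraMap r => exact AlgHom.commutes _ r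
    | add x y _ _ hx hy => rw [map_add, hx, hy]
    | mul x y _ _ hx hy => rw [map_mul, hx, hy]
end

section
/- For every finite subgroup G of the orthogonal group O(6) acting freely on the unit sphere S⁵ ⊂ ℝ⁶, there exists a nonzero G-invariant harmonic polynomial on ℝ⁶, homogeneous of degree d with 1 ≤ d ≤ 4. (Equivalently, the first nonzero eigenvalue of the scalar Laplacian on any smooth quotient S⁵/G is at most 4·(4 + 5 − 1) = 32.) -/
/-!
Let `G` act on `ℝ⁶` by orthogonal matrices, freely off the origin.

A symmetric matrix `M` commuting with `G` gives the invariant quadratic form `xᵀ M x`, and removing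
the trace makes it harmonic. So a harmonic invariant of degree 2 exists unless every symmetric
matrix commuting with `G` is scalar (`hasInvariant_of_commute`); in particular one may assume that
`G` has no proper invariant subspace (`eq_bot_or_top`).

Suppose some proper nonzero subspace `W` of dimension `d` is such that every `x ∈ G` maps `W` either
into `W` or into `Wᗮ`. Writing `q_x(v) = |P x v|²` with `P` the orthogonal projection onto `W`, the
quartic `∑ₓ q_x² - (d (d + 2) |G| / 48) |v|⁴` is invariant, it is harmonic because `∑ₓ q_x` is a
multiple of `|v|²`, and at a unit vector of `W` its value is `d (6 - d) |G| / 48 ≠ 0`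
(`hasInvariant_of_imprimitive`).

It remains to find `W`. Freeness forces every Sylow subgroup of `G` to be cyclic
(`isCyclic_of_actsFreely`): a minimal noncyclic `p`-group would contain either a noncyclic abelian
subgroup, which cannot act freely, or a copy of the quaternion group, which would make `ℝ⁶` a
vector space over the quaternions although `4 ∤ 6`. Hence `G` is generated by two elements `g, h`
with `⟨g⟩` normal. Take `W` to be an eigenspace of `S = g + g⁻¹`. As `S` is symmetric and
`x⁻¹ S x = gⁿ + g⁻ⁿ` acts on `W` as a scalar, `x` maps `W` into an eigenspace of `S`, which is `W` or
orthogonal to `W`. If `W` is everything, then `h⁻¹ g h = g^{±1}`, and for a common complex eigenvector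
`u` of `g` and `h²` the real span of the real and imaginary parts of `u` and `h u` is invariant under
`G` and of dimension at most 4 (`exists_invariant_subspace`), contradicting irreducibility.
-/

open MvPolynomial

/-- The Laplacian `Σ ∂²p/∂xᵢ²` of a polynomial in finitely many real variables. -/
noncomputable def polyLap {σ : Type*} [Fintype σ] (p : MvPolynomial σ ℝ) : MvPolynomial σ ℝ :=
  ∑ i, MvPolynomial.pderiv i (MvPolynomial.pderiv i p)

/-- A polynomial is harmonic if its Laplacian vanishes identically. -/
def IsHarmonic {σ : Type*} [Fintype σ] (p : MvPolynomial σ ℝ) : Prop := polyLap p = 0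

/-- The substitution `x ↦ g·x` on polynomials: the variable `xᵢ` is replaced by
`Σⱼ gᵢⱼ xⱼ`, so that `(aeval (matSub g) p)(x) = p(g·x)`. -/
noncomputable def matSub {m : ℕ} (g : Matrix (Fin m) (Fin m) ℝ) :
    Fin m → MvPolynomial (Fin m) ℝ :=
  fun i => ∑ j, MvPolynomial.C (g i j) * MvPolynomial.X j

open Matrix

/-! ### Quadratic forms and their Laplacians -/

/-- The quadratic form `xᵀ M x` as a polynomial in six variables. -/
noncomputable def quadPoly (M : Matrix (Fin 6) (Fin 6) ℝ) : MvPolynomial (Fin 6) ℝ :=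
  ∑ i, ∑ j, C (M i j) * (X i * X j)

lemma eval_quadPoly (M : Matrix (Fin 6) (Fin 6) ℝ) (x : Fin 6 → ℝ) :
    eval x (quadPoly M) = x ⬝ᵥ M *ᵥ x := by
  simp only [quadPoly, map_sum, map_mul, eval_C, eval_X, dotProduct, mulVec, Finset.mul_sum]
  refine Finset.sum_congr rfl fun i _ => Finset.sum_congr rfl fun j _ => by ring

lemma quadPoly_isHomogeneous (M : Matrix (Fin 6) (Fin 6) ℝ) : (quadPoly M).IsHomogeneous 2 := by
  refine IsHomogeneous.sum _ _ _ fun i _ => IsHomogeneous.sum _ _ _ fun j _ => ?_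
  simpa using (isHomogeneous_C (Fin 6) (M i j)).mul
    ((isHomogeneous_X ℝ i).mul (isHomogeneous_X ℝ j))

lemma eval_aeval_matSub (g : Matrix (Fin 6) (Fin 6) ℝ) (p : MvPolynomial (Fin 6) ℝ)
    (x : Fin 6 → ℝ) : eval x (aeval (matSub g) p) = eval (g *ᵥ x) p := by
  have : (aeval x).comp (aeval (matSub g)) = (aeval (g *ᵥ x) : MvPolynomial (Fin 6) ℝ →ₐ[ℝ] ℝ) := by
    ext i
    simp [matSub, mulVec, dotProduct]
  have h := DFunLike.congr_fun this p
  simpa [aeval_eq_eval] using h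

lemma aeval_matSub_quadPoly (g M : Matrix (Fin 6) (Fin 6) ℝ) :
    aeval (matSub g) (quadPoly M) = quadPoly (gᵀ * M * g) := by
  refine MvPolynomial.funext fun x => ?_
  rw [eval_aeval_matSub, eval_quadPoly, eval_quadPoly, ← mulVec_mulVec, ← mulVec_mulVec,
    dotProduct_mulVec x gᵀ, vecMul_transpose]

lemma pderiv_quadPoly {M : Matrix (Fin 6) (Fin 6) ℝ} (hM : Mᵀ = M) (k : Fin 6) :
    pderiv k (quadPoly M) = C 2 * ∑ j, C (M k j) * X j := by
  have hs : ∀ i, M i k = M k i := fun i => by conv_rhs => rw [← hM, transpose_apply]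
  simp only [quadPoly, map_sum, Derivation.leibniz, pderiv_C, pderiv_X, smul_eq_mul, mul_zero,
    add_zero, mul_add, Finset.sum_add_distrib, Pi.single_apply]
  simp only [mul_ite, mul_one, mul_zero, Finset.sum_ite_eq', Finset.mem_univ,
    if_true]
  rw [Finset.sum_comm (f := fun x y => if x = k then C (M x y) * X y else 0)]
  simp only [hs, Finset.sum_ite_eq', Finset.mem_univ, if_true]
  rw [← two_mul]
  rfl

lemma polyLap_quadPoly {M : Matrix (Fin 6) (Fin 6) ℝ} (hM : Mᵀ = M) :
    polyLap (quadPoly M) = C (2 * M.trace) := by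
  simp only [polyLap, pderiv_quadPoly hM, Derivation.leibniz, pderiv_C, map_sum, pderiv_X,
    smul_eq_mul, mul_zero, add_zero, Pi.single_apply]
  simp [Matrix.trace, Finset.mul_sum]

lemma polyLap_quadPoly_sq {M : Matrix (Fin 6) (Fin 6) ℝ} (hM : Mᵀ = M) :
    polyLap (quadPoly M ^ 2) = C (4 * M.trace) * quadPoly M + C 8 * quadPoly (M * M) := by
  have h1 : ∀ k, pderiv k (pderiv k (quadPoly M ^ 2)) =
      C 8 * (∑ j, C (M k j) * X j) ^ 2 + C 4 * C (M k k) * quadPoly M := by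
    intro k
    have h2 : pderiv k (∑ j, C (M k j) * X j : MvPolynomial (Fin 6) ℝ) = C (M k k) := by
      simp [map_sum, Derivation.leibniz, pderiv_X, Pi.single_apply]
    rw [sq, Derivation.leibniz, smul_eq_mul, map_add, Derivation.leibniz, smul_eq_mul, smul_eq_mul,
      pderiv_quadPoly hM, Derivation.leibniz, h2, pderiv_C]
    simp only [smul_eq_mul, show (C 8 : MvPolynomial (Fin 6) ℝ) = 8 from rfl,
      show (C 4 : MvPolynomial (Fin 6) ℝ) = 4 from rfl,
      show (C 2 : MvPolynomial (Fin 6) ℝ) = 2 from rfl]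
    ring
  have h3 : ∑ k, (∑ j, C (M k j) * X j : MvPolynomial (Fin 6) ℝ) ^ 2 = quadPoly (M * M) := by
    refine MvPolynomial.funext fun x => ?_
    rw [eval_quadPoly, ← mulVec_mulVec, dotProduct_mulVec]
    nth_rw 2 [← hM]
    rw [vecMul_transpose]
    simp [mulVec, dotProduct, sq]
  simp only [polyLap, h1, Finset.sum_add_distrib, ← Finset.mul_sum, h3, ← Finset.sum_mul]
  simp [Matrix.trace]
  ring

lemma polyLap_sub (p q : MvPolynomial (Fin 6) ℝ) : polyLap (p - q) = polyLap p - polyLap q := by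
  simp [polyLap]

lemma polyLap_C_mul (c : ℝ) (p : MvPolynomial (Fin 6) ℝ) :
    polyLap (C c * p) = C c * polyLap p := by
  simp [polyLap, Finset.mul_sum]

lemma polyLap_sum {ι : Type*} (s : Finset ι) (p : ι → MvPolynomial (Fin 6) ℝ) :
    polyLap (∑ i ∈ s, p i) = ∑ i ∈ s, polyLap (p i) := by
  simp only [polyLap, map_sum]
  exact Finset.sum_comm

/-- There is a nonzero harmonic polynomial on `ℝ⁶`, homogeneous of some degree between 1 and 4 and
invariant under the matrix representation `ρ`. -/
def HasInvariant {G : Type} [Group G] (ρ : G →* Matrix (Fin 6) (Fin 6) ℝ) : Prop :=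
  ∃ (p : MvPolynomial (Fin 6) ℝ) (d : ℕ), p ≠ 0 ∧ 1 ≤ d ∧ d ≤ 4 ∧
      p.IsHomogeneous d ∧ IsHarmonic p ∧ ∀ g, aeval (matSub (ρ g)) p = p

lemma quadPoly_eq_zero {M : Matrix (Fin 6) (Fin 6) ℝ} (hM : Mᵀ = M) (h : quadPoly M = 0) :
    M = 0 := by
  ext i j
  have h1 := pderiv_quadPoly hM i
  rw [h, map_zero] at h1
  have := congrArg (eval (Pi.single j 1)) h1
  simpa [Pi.single_apply] using this.symm

/-- The invariant is the quadratic form of the traceless part of `M`. -/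
lemma hasInvariant_of_commute {G : Type} [Group G] {ρ : G →* Matrix (Fin 6) (Fin 6) ℝ}
    (hρ : ∀ g, (ρ g)ᵀ * ρ g = 1) {M : Matrix (Fin 6) (Fin 6) ℝ} (hM : Mᵀ = M)
    (hc : ∀ g, M * ρ g = ρ g * M) (hs : M ≠ (M.trace / 6) • 1) : HasInvariant ρ := by
  have hN : (M - (M.trace / 6) • 1)ᵀ = M - (M.trace / 6) • (1 : Matrix (Fin 6) (Fin 6) ℝ) := by
    simp [hM]
  refine ⟨quadPoly (M - (M.trace / 6) • 1), 2, fun h => hs ?_, by norm_num, by norm_num,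
    quadPoly_isHomogeneous _, ?_, fun g => ?_⟩
  · exact sub_eq_zero.1 (quadPoly_eq_zero hN h)
  · rw [IsHarmonic, polyLap_quadPoly hN]
    have : (M - (M.trace / 6) • (1 : Matrix (Fin 6) (Fin 6) ℝ)).trace = 0 := by
      rw [trace_sub, trace_smul, trace_one]; simp
    rw [this]; simp
  · rw [aeval_matSub_quadPoly]
    congr 1
    rw [mul_assoc, sub_mul, hc, smul_mul_assoc, one_mul, mul_sub, ← mul_assoc, hρ, one_mul,
      mul_smul_comm, hρ]

/-! ### The quartic invariant -/

/-- The trace of a nonzero orthogonal projection is the sum of the squares of its entries. -/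
lemma trace_proj_pos {P : Matrix (Fin 6) (Fin 6) ℝ} (hPt : Pᵀ = P) (hPP : P * P = P)
    (h0 : P ≠ 0) : 0 < P.trace := by
  have h : P.trace = ∑ i, ∑ j, P j i ^ 2 := by
    conv_lhs => rw [← hPP]
    nth_rw 1 [← hPt]
    simp [Matrix.trace, Matrix.mul_apply, sq]
  rw [h]
  refine lt_of_le_of_ne (by positivity) fun h' => h0 ?_
  ext j i
  have h1 := (Finset.sum_eq_zero_iff_of_nonneg (fun i _ => by positivity)).1 h'.symm i
    (Finset.mem_univ i)
  have h2 := (Finset.sum_eq_zero_iff_of_nonneg (fun i _ => by positivity)).1 h1 j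
    (Finset.mem_univ j)
  simpa using h2

/-- If every symmetric matrix commuting with `G` is scalar and `P` is the orthogonal projection onto a
proper nonzero subspace `W` which each `g ∈ G` maps either into `W` or into its orthogonal complement,
then `G` has a harmonic quartic invariant: the sum over the group of the squares of the transforms of
`xᵀ P x`, corrected by a multiple of `|x|⁴`. -/
lemma hasInvariant_of_imprimitive {G : Type} [Group G] [Finite G]
    {ρ : G →* Matrix (Fin 6) (Fin 6) ℝ} (hρ : ∀ g, (ρ g)ᵀ * ρ g = 1)
    (hirr : ∀ M : Matrix (Fin 6) (Fin 6) ℝ, Mᵀ = M → (∀ g, M * ρ g = ρ g * M) →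
      M = (M.trace / 6) • 1)
    {P : Matrix (Fin 6) (Fin 6) ℝ} (hPt : Pᵀ = P) (hPP : P * P = P) (h0 : P ≠ 0) (h1 : P ≠ 1)
    (hP : ∀ g, P * ρ g * P = ρ g * P ∨ P * ρ g * P = 0) : HasInvariant ρ := by
  have := Fintype.ofFinite G
  have hρ' : ∀ g, ρ g * (ρ g)ᵀ = 1 := fun g => mul_eq_one_comm.1 (hρ g)
  set N : ℝ := (Fintype.card G : ℝ) with hN
  have hNpos : 0 < N := by rw [hN]; exact_mod_cast Fintype.card_pos
  set d := P.trace with hd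
  have hd0 : 0 < d := trace_proj_pos hPt hPP h0
  have hd6 : d < 6 := by
    have := trace_proj_pos (P := 1 - P) (by simp [hPt]) (by
      rw [mul_sub, sub_mul, sub_mul, hPP]; simp) (sub_ne_zero.2 h1.symm)
    rw [trace_sub, trace_one] at this
    simp at this
    exact this
  set Q : G → Matrix (Fin 6) (Fin 6) ℝ := fun t => (ρ t)ᵀ * P * ρ t with hQ
  have hQt : ∀ t, (Q t)ᵀ = Q t := fun t => by simp [hQ, hPt, mul_assoc]
  have hQQ : ∀ t, Q t * Q t = Q t := fun t => by
    calc Q t * Q t = (ρ t)ᵀ * P * (ρ t * (ρ t)ᵀ) * P * ρ t := by simp only [hQ, mul_assoc]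
      _ = (ρ t)ᵀ * (P * P) * ρ t := by rw [hρ']; simp only [mul_assoc, mul_one]
      _ = Q t := by rw [hPP]
  have hQtr : ∀ t, (Q t).trace = d := fun t => by
    simp only [hQ]; rw [trace_mul_comm, ← mul_assoc, hρ', one_mul]
  have hQg : ∀ t g, (ρ g)ᵀ * Q t * ρ g = Q (t * g) := fun t g => by
    simp only [hQ, map_mul, transpose_mul, mul_assoc]
  -- The sum of the transforms of `P` commutes with `G`, hence is scalar; its trace is `N * d`.
  have hsum : ∑ t, Q t = (N * d / 6) • 1 := by
    have h := hirr (∑ t, Q t) (by rw [transpose_sum]; simp only [hQt]) fun g => by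
      have e : (ρ g)ᵀ * (∑ t, Q t) * ρ g = ∑ t, Q t := by
        rw [Finset.mul_sum, Finset.sum_mul]
        simp only [hQg]
        exact Equiv.sum_comp (Equiv.mulRight g) Q
      conv_rhs => rw [← e]
      rw [← mul_assoc, ← mul_assoc, hρ', one_mul]
    rw [trace_sum] at h
    simpa only [hQtr, Finset.sum_const, Finset.card_univ, nsmul_eq_mul] using h
  have hsumq : ∑ t, quadPoly (Q t) = C (N * d / 6) * quadPoly 1 := by
    refine MvPolynomial.funext fun x => ?_
    rw [map_sum, map_mul, eval_C]
    simp only [eval_quadPoly]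
    rw [← dotProduct_sum, ← sum_mulVec, hsum, smul_mulVec, dotProduct_smul, smul_eq_mul]
  -- The constant is the one for which the Laplacian vanishes.
  set c : ℝ := d * (d + 2) * N / 48 with hc
  refine ⟨∑ t, quadPoly (Q t) ^ 2 - C c * quadPoly 1 ^ 2, 4, fun hz => ?_, by norm_num, by norm_num,
    ?_, ?_, fun g => ?_⟩
  · -- On the range of `P` each `v ⬝ᵥ Q t *ᵥ v` is `0` or `|v|²`, so the sum of their squares is
    -- known from the sum of the values.
    obtain ⟨w, hw⟩ : ∃ w, P *ᵥ w ≠ 0 := by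
      by_contra! h
      exact h0 (Matrix.ext_of_mulVec_single fun i => by rw [h, zero_mulVec])
    set v := P *ᵥ w with hv
    have hPv : P *ᵥ v = v := by rw [hv, mulVec_mulVec, hPP]
    set r := v ⬝ᵥ v with hr
    have hrpos : r ≠ 0 := by rwa [hr, Ne, dotProduct_self_eq_zero]
    have hval : ∀ t, (v ⬝ᵥ Q t *ᵥ v) ^ 2 = r * (v ⬝ᵥ Q t *ᵥ v) := by
      intro t
      have e : v ⬝ᵥ Q t *ᵥ v = (ρ t *ᵥ v) ⬝ᵥ ((P * ρ t * P) *ᵥ v) := by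
        rw [← mulVec_mulVec v (P * ρ t) P, hPv]
        change v ⬝ᵥ ((ρ t)ᵀ * P * ρ t) *ᵥ v = _
        rw [mul_assoc, ← mulVec_mulVec, dotProduct_mulVec, vecMul_transpose]
      rcases hP t with h | h
      · have e' : (ρ t *ᵥ v) ⬝ᵥ ((P * ρ t * P) *ᵥ v) = r := by
          rw [h, ← mulVec_mulVec, hPv, dotProduct_mulVec, ← mulVec_transpose, mulVec_mulVec, hρ,
            one_mulVec]
        rw [e, e', sq]
      · rw [h, zero_mulVec, dotProduct_zero] at e
        rw [e]; ring
    have e1 := congrArg (eval v) hsumq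
    have e2 := congrArg (eval v) hz
    simp only [map_sum, map_sub, map_mul, map_pow, eval_C, eval_quadPoly, hval, one_mulVec,
      map_zero, ← Finset.mul_sum] at e1 e2
    rw [e1, ← hr] at e2
    have : d * N * (6 - d) * r ^ 2 = 0 := by rw [hc] at e2; linear_combination 48 * e2
    have h6 : 6 - d ≠ 0 := by linarith
    simp [hd0.ne', hNpos.ne', h6, hrpos] at this
  · refine (IsHomogeneous.sum _ _ _ fun t _ => ?_).sub ?_
    · exact (quadPoly_isHomogeneous (Q t)).pow 2
    · simpa using (isHomogeneous_C (Fin 6) c).mul ((quadPoly_isHomogeneous 1).pow 2)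
  · rw [IsHarmonic, polyLap_sub, polyLap_sum, polyLap_C_mul, polyLap_quadPoly_sq transpose_one]
    simp only [polyLap_quadPoly_sq (hQt _), hQQ, hQtr, ← add_mul, ← map_add, ← Finset.mul_sum,
      hsumq, mul_one, ← mul_assoc, ← map_mul, ← sub_mul, ← map_sub, trace_one]
    have : (4 * d + 8) * (N * d / 6) - c * (4 * ((Fintype.card (Fin 6) : ℕ) : ℝ) + 8) = 0 := by
      rw [hc]; simp; ring
    rw [this]; simp
  · rw [map_sub, map_sum, map_mul, map_pow]
    simp only [map_pow, aeval_matSub_quadPoly, hQg, mul_one, hρ, aeval_C, algebraMap_eq]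
    have e : ∑ t, quadPoly (Q (t * g)) ^ 2 = ∑ t, quadPoly (Q t) ^ 2 :=
      Equiv.sum_comp (Equiv.mulRight g) fun t => quadPoly (Q t) ^ 2
    rw [e]

/-! ### Free actions -/

/-- No non-identity element of `G` fixes a nonzero vector of `ℝ⁶`. -/
def ActsFreely {G : Type} [Group G] (ρ : G →* Matrix (Fin 6) (Fin 6) ℝ) : Prop :=
  ∀ g, g ≠ 1 → ∀ v : Fin 6 → ℝ, ρ g *ᵥ v = v → v = 0

lemma exists_joint_eigenvector {A B : Matrix (Fin 6) (Fin 6) ℂ} (h : A * B = B * A) :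
    ∃ (u : Fin 6 → ℂ) (s t : ℂ), u ≠ 0 ∧ A *ᵥ u = s • u ∧ B *ᵥ u = t • u := by
  obtain ⟨s, hs⟩ := Module.End.exists_eigenvalue (toLin' A)
  have hmaps : ∀ x ∈ Module.End.eigenspace (toLin' A) s,
      toLin' B x ∈ Module.End.eigenspace (toLin' A) s := by
    intro x hx
    rw [Module.End.mem_eigenspace_iff, toLin'_apply] at hx ⊢
    rw [toLin'_apply, mulVec_mulVec, h, ← mulVec_mulVec, hx, mulVec_smul]
  have : Nontrivial (Module.End.eigenspace (toLin' A) s) :=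
    Submodule.nontrivial_iff_ne_bot.2 hs
  obtain ⟨t, ht⟩ := Module.End.exists_eigenvalue ((toLin' B).restrict hmaps)
  obtain ⟨⟨u, hu⟩, hut⟩ := ht.exists_hasEigenvector
  refine ⟨u, s, t, fun h0 => hut.2 (Subtype.ext h0), ?_, ?_⟩
  · simpa [Module.End.mem_eigenspace_iff] using hu
  · have := congrArg Subtype.val hut.apply_eq_smul
    simpa using this

/-- The complexification of a real matrix representation. -/
noncomputable def complexify {G : Type} [Group G] (ρ : G →* Matrix (Fin 6) (Fin 6) ℝ) :
    G →* Matrix (Fin 6) (Fin 6) ℂ :=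
  (Complex.ofRealHom.mapMatrix :
    Matrix (Fin 6) (Fin 6) ℝ →+* Matrix (Fin 6) (Fin 6) ℂ).toMonoidHom.comp ρ

lemma complexify_re {G : Type} [Group G] (ρ : G →* Matrix (Fin 6) (Fin 6) ℝ) (g : G)
    (u : Fin 6 → ℂ) (i : Fin 6) :
    ((complexify ρ g *ᵥ u) i).re = (ρ g *ᵥ fun k => (u k).re) i := by
  simp [complexify, mulVec, dotProduct, RingHom.mapMatrix_apply]

lemma complexify_im {G : Type} [Group G] (ρ : G →* Matrix (Fin 6) (Fin 6) ℝ) (g : G)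
    (u : Fin 6 → ℂ) (i : Fin 6) :
    ((complexify ρ g *ᵥ u) i).im = (ρ g *ᵥ fun k => (u k).im) i := by
  simp [complexify, mulVec, dotProduct, RingHom.mapMatrix_apply]

lemma ActsFreely.complexify_eq_one {G : Type} [Group G] {ρ : G →* Matrix (Fin 6) (Fin 6) ℝ}
    (hf : ActsFreely ρ) {g : G} {u : Fin 6 → ℂ} (hu : u ≠ 0) (h : complexify ρ g *ᵥ u = u) :
    g = 1 := by
  by_contra hg
  have h1 := hf g hg (fun k => (u k).re) (funext fun i => by rw [← complexify_re, h])
  have h2 := hf g hg (fun k => (u k).im) (funext fun i => by rw [← complexify_im, h])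
  exact hu (funext fun i => Complex.ext (congrFun h1 i) (congrFun h2 i))

lemma pow_mulVec_eigen {A : Matrix (Fin 6) (Fin 6) ℂ} {u : Fin 6 → ℂ} {s : ℂ}
    (h : A *ᵥ u = s • u) (n : ℕ) : (A ^ n) *ᵥ u = s ^ n • u := by
  induction n with
  | zero => simp
  | succ n ih => rw [pow_succ, ← mulVec_mulVec, h, mulVec_smul, ih, smul_smul, pow_succ, mul_comm]

/-- On a common complex eigenvector, the eigenvalue of `a` is a primitive root of unity of order
`orderOf a`, so the eigenvalue of `b` is one of its powers `s ^ k`; then `b⁻¹ * a ^ k` fixes the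
eigenvector and is trivial. This replaces the statement that abelian groups acting freely are
cyclic. -/
lemma ActsFreely.mem_zpowers {G : Type} [Group G] [Finite G]
    {ρ : G →* Matrix (Fin 6) (Fin 6) ℝ} (hf : ActsFreely ρ) {a b : G} (hab : a * b = b * a)
    (hb : b ^ orderOf a = 1) : b ∈ Subgroup.zpowers a := by
  obtain ⟨u, s, t, hu, hs, ht⟩ := exists_joint_eigenvector
    (A := complexify ρ a) (B := complexify ρ b) (by rw [← map_mul, hab, map_mul])
  have hsn : ∀ n, complexify ρ (a ^ n) *ᵥ u = s ^ n • u := fun n => by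
    rw [map_pow, pow_mulVec_eigen hs]
  have htn : ∀ n, complexify ρ (b ^ n) *ᵥ u = t ^ n • u := fun n => by
    rw [map_pow, pow_mulVec_eigen ht]
  have hone : ∀ x : ℂ, u = x • u → x = 1 := fun x hx => by
    have : (1 - x) • u = 0 := by rw [sub_smul, one_smul, ← hx, sub_self]
    exact (sub_eq_zero.1 ((smul_eq_zero.1 this).resolve_right hu)).symm
  have hprim : IsPrimitiveRoot s (orderOf a) := by
    refine ⟨hone _ ?_, fun n hn => orderOf_dvd_of_pow_eq_one (hf.complexify_eq_one hu ?_)⟩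
    · rw [← hsn, pow_orderOf_eq_one, map_one, one_mulVec]
    · rw [hsn, hn, one_smul]
  have ht1 : t ^ orderOf a = 1 := hone _ (by rw [← htn, hb, map_one, one_mulVec])
  have : NeZero (orderOf a) := ⟨(orderOf_pos a).ne'⟩
  obtain ⟨k, -, hk⟩ := hprim.eq_pow_of_pow_eq_one ht1
  have hinv : complexify ρ (b⁻¹ * a ^ k) *ᵥ u = u := by
    rw [map_mul, ← mulVec_mulVec, hsn, hk, ← ht, mulVec_mulVec, ← map_mul, inv_mul_cancel, map_one,
      one_mulVec]
  have := hf.complexify_eq_one hu hinv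
  rw [inv_mul_eq_one] at this
  exact this ▸ Subgroup.npow_mem_zpowers a k

lemma ActsFreely.injective {G : Type} [Group G] {ρ : G →* Matrix (Fin 6) (Fin 6) ℝ}
    (hf : ActsFreely ρ) : Function.Injective ρ := by
  rw [injective_iff_map_eq_one]
  intro g hg
  by_contra h
  have := hf g h 1 (by rw [hg, one_mulVec])
  exact one_ne_zero this

/-- The range of `ρ z + 1` consists of vectors fixed by `z`. -/
lemma ActsFreely.map_eq_neg_one {G : Type} [Group G] {ρ : G →* Matrix (Fin 6) (Fin 6) ℝ}
    (hf : ActsFreely ρ) {z : G} (hz : z ≠ 1) (hz2 : z * z = 1) : ρ z = -1 := by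
  refine eq_neg_of_add_eq_zero_left (Matrix.ext_of_mulVec_single fun i => ?_)
  rw [zero_mulVec]
  refine hf z hz _ ?_
  rw [mulVec_mulVec, mul_add, ← map_mul, hz2, map_one, mul_one, add_comm]

/-- Two anticommuting square roots of `-1` make `ℝ⁶` a vector space over the quaternions, which is
impossible as `4 ∤ 6`. -/
lemma not_quaternion {A B : Matrix (Fin 6) (Fin 6) ℝ} (hA : A * A = -1) (hB : B * B = -1)
    (hAB : A * B = -(B * A)) : False := by
  let q : QuaternionAlgebra.Basis (Module.End ℝ (Fin 6 → ℝ)) (-1 : ℝ) 0 (-1) :=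
    { i := toLin' A
      j := toLin' B
      k := toLin' A * toLin' B
      i_mul_i := by rw [Module.End.mul_eq_comp, ← toLin'_mul, hA]; simp [Module.End.one_eq_id]
      j_mul_j := by rw [Module.End.mul_eq_comp, ← toLin'_mul, hB]; simp [Module.End.one_eq_id]
      i_mul_j := rfl
      j_mul_i := by
        rw [Module.End.mul_eq_comp, Module.End.mul_eq_comp, ← toLin'_mul, ← toLin'_mul, hAB]; simp }
  let φ : Quaternion ℝ →ₐ[ℝ] Module.End ℝ (Fin 6 → ℝ) := q.liftHom
  let _ : Module (Quaternion ℝ) (Fin 6 → ℝ) := Module.compHom _ φ.toRingHom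
  have : IsScalarTower ℝ (Quaternion ℝ) (Fin 6 → ℝ) := ⟨fun r x v => by
    change φ (r • x) v = r • φ x v
    rw [map_smul]; rfl⟩
  have h := Module.finrank_mul_finrank ℝ (Quaternion ℝ) (Fin 6 → ℝ)
  rw [Quaternion.finrank_eq_four, Module.finrank_fin_fun] at h
  omega

/-! ### Sylow subgroups are cyclic -/

lemma pow_mul_of_central {P : Type} [Group P] {b c w : P} (hwc : Commute w c)
    (h : c * b = w * (b * c)) (n : ℕ) : c ^ n * b = w ^ n * (b * c ^ n) := by
  induction n with
  | zero => simp
  | succ n ih =>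
    have e : c * w ^ n = w ^ n * c := (hwc.pow_left n).eq.symm
    calc c ^ (n + 1) * b = c * (c ^ n * b) := by rw [pow_succ', mul_assoc]
      _ = (c * w ^ n) * (b * c ^ n) := by rw [ih, mul_assoc]
      _ = w ^ n * (c * b) * c ^ n := by rw [e]; simp only [mul_assoc]
      _ = w ^ (n + 1) * (b * c ^ (n + 1)) := by
        rw [h, pow_succ, pow_succ' c]; simp only [mul_assoc]

lemma mul_pow_of_central {P : Type} [Group P] {b c w : P} (hwb : Commute w b) (hwc : Commute w c)
    (h : c * b = w * (b * c)) (n : ℕ) : (b * c) ^ n = w ^ n.choose 2 * (b ^ n * c ^ n) := by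
  induction n with
  | zero => simp
  | succ n ih =>
    have e : b ^ n * w ^ n = w ^ n * b ^ n := ((hwb.pow_pow n n).eq).symm
    calc (b * c) ^ (n + 1) = w ^ n.choose 2 * (b ^ n * (c ^ n * b) * c) := by
          rw [pow_succ, ih]; simp only [mul_assoc]
      _ = w ^ n.choose 2 * ((b ^ n * w ^ n) * (b * c ^ n * c)) := by
          rw [pow_mul_of_central hwc h]; simp only [mul_assoc]
      _ = w ^ (n + 1).choose 2 * (b ^ (n + 1) * c ^ (n + 1)) := by
          rw [e, Nat.choose_succ_succ' n 1, Nat.choose_one_right, add_comm n, pow_add, pow_succ b,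
            pow_succ c]
          simp only [mul_assoc]

/-- A `p`-group acting freely on `ℝ⁶` has no pair `a, b` whose commutator `z` is of order `p` and
commutes with both, with `a ^ p` commuting with `b`. Replacing `b` by some `y = b * a ^ k` gives
`y ^ p ∈ ⟨z⟩`. For odd `p` this power is `1`, which puts `y` into `⟨z⟩`, so `y` commutes with `a`, a
contradiction. For `p = 2` the same argument leaves only the quaternion relations
`a ^ 2 = y ^ 2 = z = -1`. -/
lemma noncommuting_pair_false {P : Type} [Group P] [Finite P] {p : ℕ} [hp : Fact p.Prime]
    (hP : IsPGroup p P) {ρ : P →* Matrix (Fin 6) (Fin 6) ℝ} (hf : ActsFreely ρ) {a b z : P}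
    (hab : a * b = z * (b * a)) (hza : Commute z a) (hzb : Commute z b) (hz : z ≠ 1)
    (hzp : z ^ p = 1) (hapb : Commute (a ^ p) b) (hord : orderOf (b ^ p) ∣ orderOf (a ^ p)) :
    False := by
  have hoz : orderOf z = p := orderOf_eq_prime hzp hz
  -- An element with `y ^ p = 1` commuting with `z` lies in `⟨z⟩`, so it commutes with `a`.
  have key : ∀ y, Commute z y → a * y = z * (y * a) → y ^ p ≠ 1 := by
    intro y hzy hay hy
    obtain ⟨i, hi⟩ := hf.mem_zpowers hzy.eq (by rw [hoz, hy])
    have hc : Commute y a := by rw [← hi]; exact hza.zpow_left i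
    rw [hc.eq] at hay
    exact hz (by simpa using hay)
  have shift : ∀ y, Commute z y → a * y = z * (y * a) → ∀ k : ℕ,
      Commute z (y * a ^ k) ∧ a * (y * a ^ k) = z * (y * a ^ k * a) ∧
      (y * a ^ k) ^ p = z ^ (k * p.choose 2) * (y ^ p * (a ^ p) ^ k) := by
    intro y hzy hay k
    refine ⟨hzy.mul_right (hza.pow_right k), ?_, ?_⟩
    · rw [← mul_assoc, hay, mul_assoc, mul_assoc, mul_assoc, ← pow_succ, ← pow_succ']
    · rw [mul_pow_of_central (hzy.pow_left k) ((hza.pow_pow k k)) (pow_mul_of_central hza hay k),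
        ← pow_mul, ← pow_mul, ← pow_mul, mul_comm k p]
  obtain ⟨k, hk⟩ : ∃ k : ℕ, (a ^ p) ^ k = (b ^ p)⁻¹ := by
    have h := hf.mem_zpowers (a := a ^ p) (b := b ^ p) (hapb.pow_right p).eq
      (orderOf_dvd_iff_pow_eq_one.1 hord)
    have h' := mem_powers_iff_mem_zpowers.2 (inv_mem h)
    exact h'
  obtain ⟨hzy, hay, hyp⟩ := shift b hzb hab k
  have hy1 := key _ hzy hay
  set y := b * a ^ k
  rw [hk, mul_inv_cancel, mul_one] at hyp
  rcases hp.out.eq_two_or_odd with h2 | hodd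
  · subst h2
    have hzpar : ∀ n : ℕ, Even n → z ^ n = 1 := by
      rintro n ⟨m, rfl⟩
      rw [← two_mul, pow_mul, hzp, one_pow]
    have hzodd : ∀ n : ℕ, Odd n → z ^ n = z := by
      rintro n ⟨m, rfl⟩
      rw [pow_succ, pow_mul, hzp, one_pow, one_mul]
    rw [Nat.choose_self, mul_one] at hyp
    have hy : y ^ 2 = z := by
      rcases Nat.even_or_odd k with h | h
      · exact absurd (hyp.trans (hzpar k h)) hy1
      · exact hyp.trans (hzodd k h)
    have ha1 : a ^ 2 ≠ 1 := by
      intro ha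
      obtain ⟨i, hi⟩ := hf.mem_zpowers hza.eq (by rw [hoz, ha])
      have hc : Commute a y := by rw [← hi]; exact hzy.zpow_left i
      rw [hc.eq] at hay
      exact hz (by simpa using hay)
    obtain ⟨j, hj⟩ : ∃ j : ℕ, (a ^ 2) ^ j = z := by
      have h2 : 2 ∣ orderOf (a ^ 2) := by
        obtain ⟨n, hn⟩ := IsPGroup.iff_orderOf.1 hP (a ^ 2)
        rcases n with _ | n
        · exact absurd (orderOf_eq_one_iff.1 (by simpa using hn)) ha1
        · rw [hn, pow_succ]; exact dvd_mul_left _ _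
      exact mem_powers_iff_mem_zpowers.2 (hf.mem_zpowers (hza.pow_right 2).eq.symm
        (orderOf_dvd_iff_pow_eq_one.1 (by rwa [hoz])))
    obtain ⟨hzx, hax, hxp⟩ := shift y hzy hay j
    have hx1 := key _ hzx hax
    rw [hj, hy, ← sq, hzp, mul_one, Nat.choose_self, mul_one] at hxp
    have hjodd : Odd j := by
      by_contra h
      exact hx1 (hxp.trans (hzpar j (Nat.not_odd_iff_even.1 h)))
    have ha4 : a ^ 4 = 1 := by
      obtain ⟨n, hn⟩ := IsPGroup.iff_orderOf.1 hP (a ^ 4)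
      have hd : orderOf (a ^ 4) ∣ j := orderOf_dvd_of_pow_eq_one (by
        rw [← pow_mul, show 4 * j = 2 * j * 2 by ring, pow_mul, pow_mul, hj, hzp])
      rcases n with _ | n
      · exact orderOf_eq_one_iff.1 (by simpa using hn)
      · rw [hn, pow_succ] at hd
        exact absurd ((dvd_mul_left _ _).trans hd) hjodd.not_two_dvd_nat
    have ha : a ^ 2 = z := by
      obtain ⟨m, rfl⟩ := hjodd
      rw [← hj, ← pow_mul, show 2 * (2 * m + 1) = 4 * m + 2 by ring, pow_add, pow_mul, ha4, one_pow,
        one_mul]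
    have hρz := hf.map_eq_neg_one hz (by rw [← sq, hzp])
    refine not_quaternion (A := ρ a) (B := ρ y) ?_ ?_ ?_
    · rw [← map_mul, ← sq, ha, hρz]
    · rw [← map_mul, ← sq, hy, hρz]
    · rw [← map_mul, hay, map_mul, hρz, map_mul, neg_mul, one_mul]
  · refine hy1 (hyp.trans ?_)
    have : p ∣ p.choose 2 := hp.out.dvd_choose_self two_ne_zero (by
      have := hp.out.two_le
      omega)
    exact orderOf_dvd_iff_pow_eq_one.1 (hoz ▸ this.mul_left k)

/-- By induction on the order one may assume all proper subgroups cyclic. If the group is not cyclic,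
two distinct subgroups `⟨a⟩`, `⟨b⟩` of index `p` are normal, so their intersection contains the
commutator of `a` and `b` as well as `a ^ p` and `b ^ p`, and its elements commute with `a` and `b`:
this is the situation of `noncommuting_pair_false`. -/
theorem isCyclic_of_actsFreely {p : ℕ} [hp : Fact p.Prime] (n : ℕ) :
    ∀ (P : Type) [Group P] [Finite P] (ρ : P →* Matrix (Fin 6) (Fin 6) ℝ),
      IsPGroup p P → ActsFreely ρ → Nat.card P = n → IsCyclic P := by
  induction n using Nat.strong_induction_on with
  | _ n ih =>
  intro P _ _ ρ hP hf hn
  by_contra hnc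
  have hcyc : ∀ H : Subgroup P, H ≠ ⊤ → IsCyclic H := fun H hH =>
    ih (Nat.card H) (hn ▸ lt_of_le_of_ne (Subgroup.card_le_card_group H)
        fun h => hH (Subgroup.eq_top_of_card_eq H h))
      H (ρ.comp H.subtype) (hP.to_subgroup H)
      (fun g hg v hv => hf g (fun h => hg (Subtype.ext h)) v hv) rfl
  obtain ⟨m, hm⟩ := hP.exists_card_eq
  obtain ⟨m, rfl⟩ : ∃ l, m = l + 1 := by
    rcases m with _ | m
    · have : Subsingleton P := (Nat.card_eq_one_iff_unique.1 (by simpa using hm)).1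
      exact (hnc inferInstance).elim
    · exact ⟨m, rfl⟩
  have hmax : ∀ H : Subgroup P, Nat.card H = p ^ m → H.index = p ∧ H.Normal ∧ H ≠ ⊤ := by
    intro H hH
    have hi : H.index = p := by
      have := H.card_mul_index
      rw [hH, hm, pow_succ] at this
      exact Nat.eq_of_mul_eq_mul_left (pow_pos hp.out.pos m) this
    refine ⟨hi, Subgroup.normal_of_index_eq_minFac_card ?_, ?_⟩
    · rw [hi, hm, hp.out.pow_minFac (Nat.succ_ne_zero m)]
    · rintro rfl
      rw [Subgroup.index_top] at hi
      exact hp.out.one_lt.ne hi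
  have hdvd : p ^ m ∣ Nat.card P := hm ▸ pow_dvd_pow p (Nat.le_succ m)
  obtain ⟨A, hA⟩ := Sylow.exists_subgroup_card_pow_prime p hdvd
  obtain ⟨hAi, hAn, hAt⟩ := hmax A hA
  obtain ⟨x, hx⟩ : ∃ x, x ∉ A := by
    by_contra! h
    exact hAt ((Subgroup.eq_top_iff' A).2 h)
  obtain ⟨B, hB, hxB⟩ : ∃ B : Subgroup P, Nat.card B = p ^ m ∧ Subgroup.zpowers x ≤ B := by
    obtain ⟨l, hl⟩ := (hP.to_subgroup (Subgroup.zpowers x)).exists_card_eq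
    refine Sylow.exists_subgroup_card_pow_prime_le p hdvd _ hl ?_
    by_contra! h
    refine hnc (isCyclic_of_card_le_orderOf x ?_)
    rw [hm, ← Nat.card_zpowers, hl]
    exact Nat.pow_le_pow_right hp.out.pos h
  obtain ⟨hBi, hBn, hBt⟩ := hmax B hB
  have hBA : ¬ B ≤ A := fun h => hx (h (hxB (Subgroup.mem_zpowers x)))
  have hAB : ¬ A ≤ B := fun h => hBA (Subgroup.eq_of_le_of_card_ge h (by rw [hA, hB])).ge
  obtain ⟨a, rfl⟩ := (Subgroup.isCyclic_iff_exists_zpowers_eq_top A).1 (hcyc A hAt)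
  obtain ⟨b, rfl⟩ := (Subgroup.isCyclic_iff_exists_zpowers_eq_top B).1 (hcyc B hBt)
  have hcomm : ∀ {x y : P}, x ∈ Subgroup.zpowers y → Commute x y := by
    rintro _ y ⟨i, rfl⟩
    exact (Commute.refl y).zpow_left i
  have hord : ∀ u v : P, orderOf u ∣ orderOf v ∨ orderOf v ∣ orderOf u := fun u v => by
    obtain ⟨i, hi⟩ := IsPGroup.iff_orderOf.1 hP u
    obtain ⟨j, hj⟩ := IsPGroup.iff_orderOf.1 hP v
    rw [hi, hj]
    exact (le_total i j).imp (pow_dvd_pow p) (pow_dvd_pow p)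
  have hne : a * b ≠ b * a := by
    intro h
    rcases hord a b with h' | h'
    · exact hAB (Subgroup.zpowers_le.2 (hf.mem_zpowers h.symm (orderOf_dvd_iff_pow_eq_one.1 h')))
    · exact hBA (Subgroup.zpowers_le.2 (hf.mem_zpowers h (orderOf_dvd_iff_pow_eq_one.1 h')))
  have hapb : Commute (a ^ p) b := hcomm (by
    have := Subgroup.pow_index_mem (Subgroup.zpowers b) a
    rwa [hBi] at this)
  have hbpa : Commute (b ^ p) a := hcomm (by
    have := Subgroup.pow_index_mem (Subgroup.zpowers a) b
    rwa [hAi] at this)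
  obtain ⟨z, hz⟩ : ∃ z, z = a * b * a⁻¹ * b⁻¹ := ⟨_, rfl⟩
  have hza : Commute z a := hcomm (by
    rw [hz, mul_assoc, mul_assoc, ← mul_assoc b]
    exact mul_mem (Subgroup.mem_zpowers a)
      (hAn.conj_mem _ (inv_mem (Subgroup.mem_zpowers a)) b))
  have hzb : Commute z b := hcomm (by
    rw [hz]
    exact mul_mem (hBn.conj_mem _ (Subgroup.mem_zpowers b) a) (inv_mem (Subgroup.mem_zpowers b)))
  have hab : a * b = z * (b * a) := by rw [hz]; group
  have hz1 : z ≠ 1 := fun h => hne (by rw [hab, h, one_mul])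
  have hzp : z ^ p = 1 := by
    have h1 := pow_mul_of_central hza hab p
    rw [hapb.eq] at h1
    simpa using h1
  have hba : b * a = z⁻¹ * (a * b) := by rw [hab, inv_mul_cancel_left]
  rcases hord (b ^ p) (a ^ p) with h | h
  · exact noncommuting_pair_false hP hf hab hza hzb hz1 hzp hapb h
  · exact noncommuting_pair_false hP hf hba hzb.inv_left hza.inv_left (inv_ne_one.2 hz1)
      (by rw [inv_pow, hzp, inv_one]) hbpa h

lemma ActsFreely.isZGroup {G : Type} [Group G] [Finite G] {ρ : G →* Matrix (Fin 6) (Fin 6) ℝ}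
    (hf : ActsFreely ρ) : IsZGroup G :=
  ⟨fun p hp P => by
    have := Fact.mk hp
    exact isCyclic_of_actsFreely (p := p) _ P (ρ.comp P.toSubgroup.subtype) P.2
      (fun g hg v hv => hf g (fun h => hg (Subtype.ext h)) v hv) rfl⟩

/-- `g` generates the commutator subgroup and `h` generates the abelianization. -/
lemma IsZGroup.exists_generators {G : Type} [Group G] [Finite G] [IsZGroup G] :
    ∃ g h : G, (Subgroup.zpowers g).Normal ∧ ∀ x : G, ∃ i j : ℕ, x = h ^ i * g ^ j := by
  obtain ⟨g, hg⟩ := (Subgroup.isCyclic_iff_exists_zpowers_eq_top _).1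
    (IsZGroup.isCyclic_commutator (G := G))
  obtain ⟨h', hh'⟩ := IsCyclic.exists_generator (α := Abelianization G)
  obtain ⟨h, rfl⟩ := QuotientGroup.mk_surjective h'
  refine ⟨g, h, hg ▸ inferInstance, fun x => ?_⟩
  obtain ⟨i, hi⟩ := mem_powers_iff_mem_zpowers.2 (hh' (QuotientGroup.mk x))
  have : (h ^ i)⁻¹ * x ∈ commutator G := QuotientGroup.eq.1 hi
  rw [← hg] at this
  obtain ⟨j, hj⟩ := mem_powers_iff_mem_zpowers.2 this
  exact ⟨i, j, by simp only at hj; rw [hj, mul_inv_cancel_left]⟩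

/-! ### Invariant subspaces and eigenspaces -/

/-- The matrix of the orthogonal projection onto `W`. -/
lemma exists_proj (W : Submodule ℝ (Fin 6 → ℝ)) : ∃ P : Matrix (Fin 6) (Fin 6) ℝ,
    Pᵀ = P ∧ P * P = P ∧ (∀ v, P *ᵥ v ∈ W) ∧ ∀ v ∈ W, P *ᵥ v = v := by
  let e := WithLp.linearEquiv 2 ℝ (Fin 6 → ℝ)
  let W' : Submodule ℝ (EuclideanSpace ℝ (Fin 6)) := W.comap e.toLinearMap
  let T : (Fin 6 → ℝ) →ₗ[ℝ] (Fin 6 → ℝ) :=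
    e.toLinearMap ∘ₗ W'.starProjection.toLinearMap ∘ₗ e.symm.toLinearMap
  have hT : ∀ v, LinearMap.toMatrix' T *ᵥ v = e (W'.starProjection (e.symm v)) := fun v => by
    rw [← toLin'_apply, toLin'_toMatrix']; rfl
  have hmem : ∀ v, LinearMap.toMatrix' T *ᵥ v ∈ W := fun v => by
    rw [hT]; exact W'.starProjection_apply_mem (e.symm v)
  have hfix : ∀ v ∈ W, LinearMap.toMatrix' T *ᵥ v = v := fun v hv => by
    rw [hT, Submodule.starProjection_eq_self_iff.2 (show e.symm v ∈ W' by simpa [W'] using hv)]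
    simp
  refine ⟨LinearMap.toMatrix' T, ?_, ?_, hmem, hfix⟩
  · ext i j
    have h := W'.inner_starProjection_left_eq_right (EuclideanSpace.single i (1 : ℝ))
      (EuclideanSpace.single j 1)
    have h1 : ∀ k, e.symm (Pi.single k 1) = EuclideanSpace.single k (1 : ℝ) := fun k => rfl
    have h2 : ∀ k l, LinearMap.toMatrix' T k l = W'.starProjection (EuclideanSpace.single l 1) k :=
      fun k l => by
        rw [LinearMap.toMatrix'_apply, ← h1]
        rfl
    rw [transpose_apply, h2, h2]
    simpa [EuclideanSpace.inner_single_left, EuclideanSpace.inner_single_right] using h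
  · refine Matrix.ext_of_mulVec_single fun i => ?_
    rw [← mulVec_mulVec, hfix _ (hmem _)]

section
variable {G : Type} [Group G] {ρ : G →* Matrix (Fin 6) (Fin 6) ℝ}

lemma map_inv_eq_transpose (hρ : ∀ g, (ρ g)ᵀ * ρ g = 1) (g : G) : ρ g⁻¹ = (ρ g)ᵀ := by
  calc ρ g⁻¹ = (ρ g)ᵀ * ρ g * ρ g⁻¹ := by rw [hρ, one_mul]
    _ = (ρ g)ᵀ := by rw [mul_assoc, ← map_mul, mul_inv_cancel, map_one, mul_one]

/-- The orthogonal projection onto an invariant subspace commutes with `G`. -/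
lemma eq_bot_or_top (hρ : ∀ g, (ρ g)ᵀ * ρ g = 1)
    (hirr : ∀ M : Matrix (Fin 6) (Fin 6) ℝ, Mᵀ = M → (∀ g, M * ρ g = ρ g * M) →
      M = (M.trace / 6) • 1)
    {W : Submodule ℝ (Fin 6 → ℝ)} (hW : ∀ x, ∀ v ∈ W, ρ x *ᵥ v ∈ W) : W = ⊥ ∨ W = ⊤ := by
  obtain ⟨P, hPt, hPP, hmem, hfix⟩ := exists_proj W
  have h1 : ∀ x, P * ρ x * P = ρ x * P := fun x => by
    refine Matrix.ext_of_mulVec_single fun i => ?_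
    rw [mul_assoc, ← mulVec_mulVec, ← mulVec_mulVec, hfix _ (hW x _ (hmem _))]
  have h2 : ∀ x, P * ρ x * P = P * ρ x := fun x => by
    have := congrArg transpose (h1 x⁻¹)
    rw [map_inv_eq_transpose hρ] at this
    simpa [hPt, mul_assoc] using this
  have hsc := hirr P hPt fun x => by rw [← h2, h1]
  by_cases hb : W = ⊥
  · exact Or.inl hb
  right
  obtain ⟨v, hv, hv0⟩ := Submodule.exists_mem_ne_zero_of_ne_bot hb
  have h3 := hfix v hv
  rw [hsc, smul_mulVec, one_mulVec] at h3
  have h4 : P.trace / 6 = 1 := by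
    have : (P.trace / 6 - 1) • v = 0 := by rw [sub_smul, one_smul, h3, sub_self]
    exact sub_eq_zero.1 ((smul_eq_zero.1 this).resolve_right hv0)
  rw [h4, one_smul] at hsc
  refine (Submodule.eq_top_iff').2 fun u => ?_
  simpa [hsc] using hmem u

/-- On an eigenspace of `g + g⁻¹`, each `gⁿ + g⁻ⁿ` is a scalar, by the Chebyshev recursion. -/
lemma eigen_powers {g : G} {l : ℝ} {P : Matrix (Fin 6) (Fin 6) ℝ}
    (hP : (ρ g + ρ g⁻¹) * P = l • P) (n : ℕ) :
    ∃ m : ℝ, (ρ (g ^ n) + ρ (g⁻¹ ^ n)) * P = m • P := by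
  induction n using Nat.twoStepInduction with
  | zero => exact ⟨2, by simp [add_mul, two_smul]⟩
  | one => exact ⟨l, by simpa using hP⟩
  | more n h0 h1 =>
    obtain ⟨m0, h0⟩ := h0
    obtain ⟨m1, h1⟩ := h1
    refine ⟨m1 * l - m0, ?_⟩
    have e : ρ (g ^ (n + 2)) + ρ (g⁻¹ ^ (n + 2)) =
        (ρ g + ρ g⁻¹) * (ρ (g ^ (n + 1)) + ρ (g⁻¹ ^ (n + 1))) - (ρ (g ^ n) + ρ (g⁻¹ ^ n)) := by
      simp only [add_mul, mul_add, ← map_mul]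
      have e1 : g * g ^ (n + 1) = g ^ (n + 2) := by rw [← pow_succ']
      have e2 : g⁻¹ * g⁻¹ ^ (n + 1) = g⁻¹ ^ (n + 2) := by rw [← pow_succ']
      have e3 : g⁻¹ * g ^ (n + 1) = g ^ n := by rw [pow_succ', inv_mul_cancel_left]
      have e4 : g * g⁻¹ ^ (n + 1) = g⁻¹ ^ n := by rw [pow_succ', mul_inv_cancel_left]
      rw [e1, e2, e3, e4]
      abel
    rw [e, sub_mul, mul_assoc, h1, h0, mul_smul_comm, hP, smul_smul, sub_smul]

/-- `x` is a root of `(X - g) (X - g⁻¹) = X² - l X + 1`, and by freeness `ρ x - ρ g` is injective unless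
`x = g`. -/
lemma conj_eq_or_inv (hf : ActsFreely ρ) {g x : G} (hgx : Commute g x) {l : ℝ}
    (hg : ρ g + ρ g⁻¹ = l • 1) (hx : ρ x + ρ x⁻¹ = l • 1) : x = g ∨ x = g⁻¹ := by
  by_cases hne : x = g
  · exact Or.inl hne
  right
  have hzero : (ρ x - ρ g) * (ρ x - ρ g⁻¹) = 0 := by
    have h1 : ρ x * ρ g + ρ x * ρ g⁻¹ = l • ρ x := by rw [← mul_add, hg, mul_smul_comm, mul_one]
    have h2 : ρ x * ρ x + ρ x * ρ x⁻¹ = l • ρ x := by rw [← mul_add, hx, mul_smul_comm, mul_one]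
    have h3 : ρ x * ρ x⁻¹ = 1 := by rw [← map_mul, mul_inv_cancel, map_one]
    have h4 : ρ g * ρ g⁻¹ = 1 := by rw [← map_mul, mul_inv_cancel, map_one]
    have h5 : ρ g * ρ x = ρ x * ρ g := by rw [← map_mul, hgx.eq, map_mul]
    rw [mul_sub, sub_mul, sub_mul, h4, h5]
    rw [h3] at h2
    rw [← h1] at h2
    rw [sub_sub_sub_comm]
    have := sub_eq_zero.2 h2
    rw [← this]; abel
  apply hf.injective
  refine sub_eq_zero.1 (Matrix.ext_of_mulVec_single fun i => ?_)
  rw [zero_mulVec]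
  have hgx1 : g⁻¹ * x ≠ 1 := fun h => hne (inv_mul_eq_one.1 h).symm
  refine hf (g⁻¹ * x) hgx1 _ ?_
  have h6 : ρ x * (ρ x - ρ g⁻¹) = ρ g * (ρ x - ρ g⁻¹) := by
    rw [← sub_eq_zero, ← sub_mul, hzero]
  rw [mulVec_mulVec, map_mul, mul_assoc, h6, ← mul_assoc, ← map_mul, inv_mul_cancel, map_one,
    one_mul]

end

lemma mulVec_mem_span_re_im {G : Type} [Group G] {ρ : G →* Matrix (Fin 6) (Fin 6) ℝ} {x : G}
    {u : Fin 6 → ℂ} {s : ℂ} (h : complexify ρ x *ᵥ u = s • u) {v : Fin 6 → ℝ}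
    (hv : v ∈ Submodule.span ℝ {(fun k => (u k).re), fun k => (u k).im}) :
    ρ x *ᵥ v ∈ Submodule.span ℝ {(fun k => (u k).re), fun k => (u k).im} := by
  obtain ⟨a, b, rfl⟩ := Submodule.mem_span_pair.1 hv
  have h1 : ρ x *ᵥ (fun k => (u k).re) =
      s.re • (fun k => (u k).re) + (-s.im) • fun k => (u k).im := by
    ext i
    rw [← complexify_re, h]
    simp [sub_eq_add_neg]
  have h2 : ρ x *ᵥ (fun k => (u k).im) = s.im • (fun k => (u k).re) + s.re • fun k => (u k).im := by
    ext i
    rw [← complexify_im, h]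
    simp [add_comm]
  rw [mulVec_add, mulVec_smul, mulVec_smul, h1, h2]
  refine Submodule.mem_span_pair.2 ⟨a * s.re + b * s.im, a * (-s.im) + b * s.re, ?_⟩
  simp only [smul_add, smul_smul, add_smul]
  abel

/-- With `u` a common complex eigenvector of `g` and `h²`, and `U` the real span of its real and
imaginary parts, the subspace `U + h U` is invariant and has dimension at most 4. -/
lemma exists_invariant_subspace {G : Type} [Group G] [Finite G]
    {ρ : G →* Matrix (Fin 6) (Fin 6) ℝ} {g h : G}
    (hgen : ∀ x : G, ∃ i j : ℕ, x = h ^ i * g ^ j) (hc : h⁻¹ * g * h = g ∨ h⁻¹ * g * h = g⁻¹) :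
    ∃ W : Submodule ℝ (Fin 6 → ℝ), (∀ x, ∀ v ∈ W, ρ x *ᵥ v ∈ W) ∧ W ≠ ⊥ ∧ W ≠ ⊤ := by
  have hpow : ∀ (W : Submodule ℝ (Fin 6 → ℝ)) (x : G), (∀ v ∈ W, ρ x *ᵥ v ∈ W) →
      ∀ n : ℕ, ∀ v ∈ W, ρ (x ^ n) *ᵥ v ∈ W := by
    intro W x hx n
    induction n with
    | zero => simp
    | succ n ih =>
      intro v hv
      rw [pow_succ, map_mul, ← mulVec_mulVec]
      exact ih _ (hx v hv)
  have hcom : g * (h * h) = h * h * g := by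
    have e : h⁻¹ * (h⁻¹ * g * h) * h = g := by
      rcases hc with e | e
      · rw [e, e]
      · rw [e, ← inv_inv (h⁻¹ * g⁻¹ * h)]
        rw [show (h⁻¹ * g⁻¹ * h)⁻¹ = h⁻¹ * g * h by group, e, inv_inv]
    calc g * (h * h) = h * h * (h⁻¹ * (h⁻¹ * g * h) * h) := by group
      _ = h * h * g := by rw [e]
  obtain ⟨u, s, t, hu, hs, ht⟩ := exists_joint_eigenvector
    (A := complexify ρ g) (B := complexify ρ (h * h)) (by rw [← map_mul, hcom, map_mul])
  set U := Submodule.span ℝ {(fun k => (u k).re), fun k => (u k).im} with hU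
  have hUg : ∀ v ∈ U, ρ g *ᵥ v ∈ U := fun v hv => mulVec_mem_span_re_im hs hv
  have hUh : ∀ v ∈ U, ρ (h * h) *ᵥ v ∈ U := fun v hv => mulVec_mem_span_re_im ht hv
  have hUc : ∀ v ∈ U, ρ (h⁻¹ * g * h) *ᵥ v ∈ U := by
    rcases hc with e | e
    · rwa [e]
    · obtain ⟨n, hn⟩ := mem_powers_iff_mem_zpowers.2 (inv_mem (Subgroup.mem_zpowers g))
      rw [e, ← hn]
      exact hpow U g hUg n
  have hUdim : Module.finrank ℝ U ≤ 2 := by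
    classical
    have := finrank_span_finset_le_card (R := ℝ)
      ({(fun k => (u k).re), fun k => (u k).im} : Finset (Fin 6 → ℝ))
    rw [Finset.coe_pair] at this
    exact this.trans Finset.card_le_two
  set V := U.map (toLin' (ρ h)) with hV
  have hVmem : ∀ v ∈ U, ρ h *ᵥ v ∈ V := fun v hv => ⟨v, hv, by simp⟩
  have hWg : ∀ v ∈ U ⊔ V, ρ g *ᵥ v ∈ U ⊔ V := by
    intro v hv
    obtain ⟨y, hy, _, ⟨w, hw, rfl⟩, rfl⟩ := Submodule.mem_sup.1 hv
    rw [mulVec_add, toLin'_apply, mulVec_mulVec, ← map_mul,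
      show g * h = h * (h⁻¹ * g * h) by group, map_mul ρ h, ← mulVec_mulVec]
    exact Submodule.add_mem_sup (hUg y hy) (hVmem _ (hUc w hw))
  have hWh : ∀ v ∈ U ⊔ V, ρ h *ᵥ v ∈ U ⊔ V := by
    intro v hv
    obtain ⟨y, hy, _, ⟨w, hw, rfl⟩, rfl⟩ := Submodule.mem_sup.1 hv
    rw [mulVec_add, toLin'_apply, mulVec_mulVec, ← map_mul, add_comm]
    exact Submodule.add_mem_sup (hUh w hw) (hVmem y hy)
  refine ⟨U ⊔ V, fun x v hv => ?_, fun hbot => hu ?_, fun htop => ?_⟩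
  · obtain ⟨i, j, rfl⟩ := hgen x
    rw [map_mul, ← mulVec_mulVec]
    exact hpow _ h hWh i _ (hpow _ g hWg j v hv)
  · have hUb : U = ⊥ := (sup_eq_bot_iff.1 hbot).1
    have h1 : (fun k => (u k).re) ∈ U := Submodule.subset_span (by simp)
    have h2 : (fun k => (u k).im) ∈ U := Submodule.subset_span (by simp)
    rw [hUb, Submodule.mem_bot] at h1 h2
    exact funext fun i => Complex.ext (congrFun h1 i) (congrFun h2 i)
  · have h1 := Submodule.finrank_add_le_finrank_add_finrank U V
    have h2 : Module.finrank ℝ V ≤ Module.finrank ℝ U := Submodule.finrank_map_le _ _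
    rw [htop, finrank_top, Module.finrank_fin_fun] at h1
    omega

/-! ### The invariant polynomial -/

theorem ActsFreely.hasInvariant {G : Type} [Group G] [Finite G]
    {ρ : G →* Matrix (Fin 6) (Fin 6) ℝ} (hρ : ∀ g, (ρ g)ᵀ * ρ g = 1) (hf : ActsFreely ρ) :
    HasInvariant ρ := by
  by_contra hno
  have hirr : ∀ M : Matrix (Fin 6) (Fin 6) ℝ, Mᵀ = M → (∀ g, M * ρ g = ρ g * M) →
      M = (M.trace / 6) • 1 := fun M hM hc => by
    by_contra h
    exact hno (hasInvariant_of_commute hρ hM hc h)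
  have := hf.isZGroup
  obtain ⟨g, h, hN, hgen⟩ := IsZGroup.exists_generators (G := G)
  have hSt : (ρ g + ρ g⁻¹)ᵀ = ρ g + ρ g⁻¹ := by
    simp [map_inv_eq_transpose hρ, add_comm]
  have hSH : (ρ g + ρ g⁻¹).IsHermitian := by
    rw [Matrix.IsHermitian, conjTranspose_eq_transpose_of_trivial, hSt]
  obtain ⟨l, v0, hv0, hl⟩ : ∃ (l : ℝ) (v : Fin 6 → ℝ), v ≠ 0 ∧ (ρ g + ρ g⁻¹) *ᵥ v = l • v :=
    ⟨hSH.eigenvalues 0, hSH.eigenvectorBasis 0, fun h0 => hSH.eigenvectorBasis.toBasis.ne_zero 0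
      (by simpa using h0), hSH.mulVec_eigenvectorBasis 0⟩
  set S := ρ g + ρ g⁻¹ with hS
  set W := Module.End.eigenspace (toLin' S) l with hW
  have hmemW : ∀ v, v ∈ W ↔ S *ᵥ v = l • v := fun v => by
    rw [hW, Module.End.mem_eigenspace_iff, toLin'_apply]
  obtain ⟨P, hPt, hPP, hmem, hfix⟩ := exists_proj W
  have hSP : S * P = l • P := by
    refine Matrix.ext_of_mulVec_single fun i => ?_
    rw [← mulVec_mulVec, (hmemW _).1 (hmem _), smul_mulVec]
  have hPS : P * S = l • P := by
    have := congrArg transpose hSP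
    simpa [hPt, hSt] using this
  have hconj : ∀ x : G, x⁻¹ * g * x ∈ Subgroup.zpowers g := fun x => by
    simpa using hN.conj_mem g (Subgroup.mem_zpowers g) x⁻¹
  by_cases hP1 : P = 1
  · -- `S` has a single eigenvalue, so `h` conjugates `g` to `g` or `g⁻¹`.
    have hS1 : S = l • 1 := by rw [hP1, mul_one] at hSP; exact hSP
    have hx : ρ (h⁻¹ * g * h) + ρ (h⁻¹ * g * h)⁻¹ = l • 1 := by
      have e : ρ (h⁻¹ * g * h) + ρ (h⁻¹ * g * h)⁻¹ = ρ h⁻¹ * S * ρ h := by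
        rw [show (h⁻¹ * g * h)⁻¹ = h⁻¹ * g⁻¹ * h by group, hS]
        simp only [map_mul, mul_add, add_mul]
      rw [e, hS1, mul_smul_comm, mul_one, smul_mul_assoc, ← map_mul, inv_mul_cancel, map_one]
    have hcomm : Commute g (h⁻¹ * g * h) := by
      obtain ⟨i, hi⟩ := hconj h
      rw [← hi]
      exact (Commute.refl g).zpow_right i
    obtain ⟨W', hinv, hb, ht⟩ := exists_invariant_subspace (ρ := ρ) hgen
      (conj_eq_or_inv hf hcomm hS1 hx)
    exact (eq_bot_or_top hρ hirr hinv).elim hb ht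
  · refine hno (hasInvariant_of_imprimitive hρ hirr hPt hPP ?_ hP1 fun x => ?_)
    · rintro rfl
      exact hv0 (by simpa using (hfix v0 ((hmemW v0).2 hl)).symm)
    · obtain ⟨n, hn⟩ := mem_powers_iff_mem_zpowers.2 (hconj x)
      simp only at hn
      obtain ⟨m, hm⟩ := eigen_powers hSP n
      have hSx : S * (ρ x * P) = m • (ρ x * P) := by
        have e : S * ρ x = ρ x * (ρ (g ^ n) + ρ (g⁻¹ ^ n)) := by
          rw [inv_pow, hn, hS, mul_add, add_mul]
          simp only [← map_mul]
          congr 2 <;> group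
        rw [← mul_assoc, e, mul_assoc, hm, mul_smul_comm]
      by_cases hml : m = l
      · left
        subst hml
        refine Matrix.ext_of_mulVec_single fun i => ?_
        rw [mul_assoc, ← mulVec_mulVec, hfix]
        rw [hmemW, mulVec_mulVec, hSx, smul_mulVec]
      · right
        have e : l • (P * ρ x * P) = m • (P * ρ x * P) := by
          calc l • (P * ρ x * P) = P * S * (ρ x * P) := by rw [hPS, smul_mul_assoc, mul_assoc]
            _ = m • (P * ρ x * P) := by rw [mul_assoc, hSx, mul_smul_comm, mul_assoc]
        have : (l - m) • (P * ρ x * P) = 0 := by rw [sub_smul, e, sub_self]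
        exact (smul_eq_zero.1 this).resolve_left (sub_ne_zero.2 (Ne.symm hml))

/-- For every finite subgroup `G` of `O(6)` acting freely on the unit sphere `S⁵ ⊂ ℝ⁶`,
there is a nonzero `G`-invariant harmonic polynomial on `ℝ⁶`, homogeneous of degree `d`
with `1 ≤ d ≤ 4` (so the first nonzero eigenvalue of the Laplacian on `S⁵/G` is at most
`4·(4+5−1) = 32`). -/
theorem free_quotient_S5_eigenvalue_bound
    (G : Subgroup (Matrix.orthogonalGroup (Fin 6) ℝ)) (hfin : Finite G)
    (hfree : ∀ g ∈ G, g ≠ 1 → ∀ v : Fin 6 → ℝ,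
      Matrix.mulVec (g : Matrix (Fin 6) (Fin 6) ℝ) v = v → v = 0) :
    ∃ (p : MvPolynomial (Fin 6) ℝ) (d : ℕ), p ≠ 0 ∧ 1 ≤ d ∧ d ≤ 4 ∧
      p.IsHomogeneous d ∧ IsHarmonic p ∧
      ∀ g ∈ G, aeval (matSub (g : Matrix (Fin 6) (Fin 6) ℝ)) p = p := by
  let ρ : G →* Matrix (Fin 6) (Fin 6) ℝ :=
    (Matrix.orthogonalGroup (Fin 6) ℝ).subtype.comp G.subtype
  have hρ : ∀ g : G, (ρ g)ᵀ * ρ g = 1 := fun g =>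
    (Matrix.mem_orthogonalGroup_iff' (Fin 6) ℝ).1 g.1.2
  have hf : ActsFreely ρ := fun g hg v hv =>
    hfree g g.2 (fun h => hg (Subtype.ext h)) v hv
  obtain ⟨p, d, h0, h1, h4, hhom, hharm, hinv⟩ := hf.hasInvariant hρ
  exact ⟨p, d, h0, h1, h4, hhom, hharm, fun g hg => hinv ⟨g, hg⟩⟩
end
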